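/- arXiv:1012.2149 — 2 statements merged into one kernel-verified Lean document; each statement's English description precedes it below -/
import Mathlib

section
/- Fix ε₀ ∈ (0,x₀) and η₀ ∈ [0,ε₀). Define ε_k recursively as the unique point of (0,ε₀) with T(ε_k) = ε_{k−1}, and η_k analogously from η₀. Then: ε_k → 0 as k → ∞; the sequence (ε_k − ε_{k+1}) is decreasing; there is a constant C such that ε_k − ε_{k+1} ≤ C·ε_k^{1+α} for all k; and (ε_k − η_k)/ε_k → 0 as k → ∞, i.e. lim_{k→∞} η_k/ε_k = 1. Consequently, the probability measures on [0,ε₀] with densities given by the normalized conditional push-forwards (P̃_{[0,ε₀]})^k χ_{[0,ε₀]} converge weakly to the Dirac measure δ₀ at 0. -/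
open MeasureTheory Set Filter Topology
open scoped Classical

/-- The standing hypotheses on the Pomeau–Manneville map `T` with exponent
`α ∈ (0,1)` and breakpoint `x₀ ∈ (0,1)`: near `0`,
`T x = x + c_α x^{1+α} + g x` with `g` of class `C²` and `g' = o(x^α)`; `T`
maps each of `(0,x₀)` and `(x₀,1)` bijectively onto `(0,1)`, is `C²` on
`(x₀,1)` and on `(ε,x₀)` for every `ε > 0`, and `T' > 1` off the breakpoint. -/
structure PMHyp (T : ℝ → ℝ) (x₀ α : ℝ) : Prop where
  αmem : α ∈ Set.Ioo (0:ℝ) 1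
  x₀mem : x₀ ∈ Set.Ioo (0:ℝ) 1
  T0 : T 0 = 0
  mapsI : Set.MapsTo T (Set.Icc 0 1) (Set.Icc 0 1)
  branch1 : Set.BijOn T (Set.Ioo 0 x₀) (Set.Ioo 0 1)
  branch2 : Set.BijOn T (Set.Ioo x₀ 1) (Set.Ioo 0 1)
  form : ∃ cα : ℝ, 0 < cα ∧ ∃ g : ℝ → ℝ, ∃ δ : ℝ, 0 < δ ∧
    (∀ x ∈ Set.Ico (0:ℝ) δ, T x = x + cα * x ^ (1+α) + g x) ∧
    ContDiffOn ℝ 2 g (Set.Ioo 0 δ) ∧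
    Filter.Tendsto (fun x => deriv g x / x ^ α) (nhdsWithin 0 (Set.Ioi 0)) (nhds 0)
  smooth2 : ContDiffOn ℝ 2 T (Set.Ioo x₀ 1)
  smooth1 : ∀ ε : ℝ, 0 < ε → ContDiffOn ℝ 2 T (Set.Ioo ε x₀)
  expand : ∀ x ∈ Set.Ioo 0 x₀ ∪ Set.Ioo x₀ 1, 1 < deriv T x

/-- `PT` is the Perron–Frobenius (transfer) operator of `T` on
`L¹([0,1], Leb)`: for integrable `φ` and measurable `A ⊆ [0,1]`,
`∫_A PT φ = ∫_{T⁻¹A ∩ [0,1]} φ`. -/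
def IsPFT (T : ℝ → ℝ) (PT : (ℝ → ℝ) → ℝ → ℝ) : Prop :=
  ∀ φ : ℝ → ℝ, MeasureTheory.IntegrableOn φ (Set.Icc 0 1) →
    MeasureTheory.IntegrableOn (PT φ) (Set.Icc 0 1) ∧
    ∀ A ⊆ Set.Icc (0:ℝ) 1, MeasurableSet A →
      ∫ z in A, PT φ z = ∫ z in T ⁻¹' A ∩ Set.Icc 0 1, φ z

/-- The averaging operator `A^ε` determined by the density `ρ` on `[0,ε₀)`:
`(A^ε f)(z) = ρ(z) ∫₀^{ε₀} f` for `z ∈ [0,ε₀)` and `(A^ε f)(z) = f(z)`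
otherwise. -/
noncomputable def Aop (ρ : ℝ → ℝ) (e0 : ℝ) (f : ℝ → ℝ) : ℝ → ℝ :=
  fun z => if z ∈ Set.Ico (0:ℝ) e0 then ρ z * ∫ y in Set.Ico (0:ℝ) e0, f y else f z

/-- The conditional Perron–Frobenius operator with respect to the set `A`:
`P_A φ = χ_A ⬝ P_T(φ ⬝ χ_A)`. -/
noncomputable def condPF1 (PT : (ℝ → ℝ) → ℝ → ℝ) (A : Set ℝ) (φ : ℝ → ℝ) :
    ℝ → ℝ :=
  A.indicator (PT (A.indicator φ))

lemma PM_strictMono {T : ℝ → ℝ} {x₀ α : ℝ} (h : PMHyp T x₀ α) :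
    StrictMonoOn (fun x => T x - x) (Ico 0 x₀) := by
  have hpos : ∀ x ∈ Ioo 0 x₀, 0 < T x := fun x hx => (h.branch1.mapsTo hx).1
  have hd : ∀ x ∈ Ioo 0 x₀, DifferentiableAt ℝ T x := by
    intro x hx
    have := h.expand x (Or.inl hx)
    by_contra hc
    rw [deriv_zero_of_not_differentiableAt hc] at this
    linarith
  have hI : StrictMonoOn (fun x => T x - x) (Ioo 0 x₀) := by
    apply strictMonoOn_of_deriv_pos (convex_Ioo _ _)
    · intro x hx
      exact ((hd x hx).sub differentiableAt_id).continuousAt.continuousWithinAt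
    · intro x hx
      rw [interior_Ioo] at hx
      have h1 := h.expand x (Or.inl hx)
      have h2 : HasDerivAt (fun x => T x - x) (deriv T x - 1) x :=
        (hd x hx).hasDerivAt.sub (hasDerivAt_id x)
      rw [h2.deriv]
      linarith
  have hnn : ∀ x ∈ Ioo 0 x₀, 0 ≤ T x - x := by
    intro x hx
    by_contra hc
    push Not at hc
    have hy : min (x/2) (x - T x) ∈ Ioo 0 x₀ := by
      refine ⟨lt_min (by linarith [hx.1]) (by linarith), ?_⟩
      exact (min_le_left _ _).trans_lt (by linarith [hx.1, hx.2])
    have h1 := hI hy hx ((min_le_left _ _).trans_lt (by linarith [hx.1]))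
    have h2 := hpos _ hy
    have h3 := min_le_right (x/2) (x - T x)
    simp only at h1
    linarith
  intro x hx y hy hxy
  rcases hx.1.eq_or_lt with h0 | h0
  · subst h0
    have hy2 : y / 2 ∈ Ioo 0 x₀ := ⟨by linarith, by linarith [hy.2]⟩
    have h1 := hI hy2 ⟨hxy, hy.2⟩ (by linarith)
    have h2 := hnn _ hy2
    simp only [h.T0] at h1 ⊢
    linarith
  · exact hI ⟨h0, hx.2⟩ ⟨h0.trans hxy, hy.2⟩ hxy

lemma PM_cont {T : ℝ → ℝ} {x₀ α : ℝ} (h : PMHyp T x₀ α) :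
    ∀ x ∈ Ioo 0 x₀, ContinuousAt T x := by
  intro x hx
  have := h.expand x (Or.inl hx)
  by_contra hc
  have hc' : ¬ DifferentiableAt ℝ T x := fun h' => hc h'.continuousAt
  rw [deriv_zero_of_not_differentiableAt hc'] at this
  linarith

lemma PM_Tmono {T : ℝ → ℝ} {x₀ α : ℝ} (h : PMHyp T x₀ α) :
    StrictMonoOn T (Ico 0 x₀) := by
  intro x hx y hy hxy
  have := PM_strictMono h hx hy hxy
  simp only at this
  linarith

lemma PM_gt {T : ℝ → ℝ} {x₀ α : ℝ} (h : PMHyp T x₀ α) {x : ℝ} (hx : x ∈ Ioo 0 x₀) :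
    x < T x := by
  have := PM_strictMono h ⟨le_refl 0, h.x₀mem.1⟩ ⟨hx.1.le, hx.2⟩ hx.1
  simp only [h.T0] at this
  linarith

lemma PM_bound {T : ℝ → ℝ} {x₀ α : ℝ} (h : PMHyp T x₀ α) :
    ∃ C : ℝ, 0 < C ∧ ∀ x ∈ Ioo 0 x₀, T x - x ≤ C * x ^ (1 + α) := by
  obtain ⟨c, hc, g, δ, hδ, hT, hg, hlim⟩ := h.form
  have hα := h.αmem
  have hev : ∀ᶠ x in 𝓝[>] (0:ℝ), |deriv g x / x ^ α| < 1 := by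
    have := hlim.abs
    rw [abs_zero] at this
    exact this.eventually (gt_mem_nhds one_pos)
  rw [eventually_nhdsWithin_iff, Metric.eventually_nhds_iff] at hev
  obtain ⟨r₁, hr₁, hev⟩ := hev
  set r := min r₁ (min δ x₀) with hr
  have hrpos : 0 < r := lt_min hr₁ (lt_min hδ h.x₀mem.1)
  have hrr1 : r ≤ r₁ := min_le_left _ _
  have hrδ : r ≤ δ := (min_le_right _ _).trans (min_le_left _ _)
  have hrx : r ≤ x₀ := (min_le_right _ _).trans (min_le_right _ _)
  have hgd : ∀ y ∈ Ioo 0 r, DifferentiableAt ℝ g y ∧ ‖deriv g y‖ ≤ y ^ α := by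
    intro y hy
    constructor
    · exact (hg.differentiableOn (by norm_num)).differentiableAt
        (Ioo_mem_nhds hy.1 (hy.2.trans_le hrδ))
    · have h1 := hev (y := y) (by
        rw [Real.dist_eq, sub_zero, abs_of_pos hy.1]; exact hy.2.trans_le hrr1) hy.1
      have hp : 0 < y ^ α := Real.rpow_pos_of_pos hy.1 _
      rw [abs_div, abs_of_pos hp, div_lt_one hp] at h1
      exact h1.le
  have hnear : ∀ x ∈ Ioo 0 r, T x - x ≤ (c + 1) * x ^ (1 + α) := by
    intro x hx
    have key : ∀ y ∈ Ioo 0 x, T x - x - (c + 1) * x ^ (1 + α) ≤ T y := by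
      intro y hy
      have h1 : ‖g x - g y‖ ≤ x ^ α * ‖x - y‖ := by
        apply Convex.norm_image_sub_le_of_norm_deriv_le (s := Ioc 0 x) (𝕜 := ℝ)
        · intro z hz; exact (hgd z ⟨hz.1, hz.2.trans_lt hx.2⟩).1
        · intro z hz
          exact (hgd z ⟨hz.1, hz.2.trans_lt hx.2⟩).2.trans
            (Real.rpow_le_rpow hz.1.le hz.2 hα.1.le)
        · exact convex_Ioc _ _
        · exact ⟨hy.1, hy.2.le⟩
        · exact ⟨hx.1, le_refl _⟩
      have hxa : 0 < x ^ α := Real.rpow_pos_of_pos hx.1 _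
      rw [Real.norm_eq_abs, Real.norm_eq_abs, abs_of_pos (sub_pos.2 hy.2)] at h1
      have h2 := (le_abs_self _).trans h1
      have h3 : x ^ (1 + α) = x * x ^ α := by
        rw [Real.rpow_add hx.1, Real.rpow_one]
      have h4 := hT x ⟨hx.1.le, hx.2.trans_le hrδ⟩
      have h5 := hT y ⟨hy.1.le, (hy.2.trans hx.2).trans_le hrδ⟩
      have h6 : 0 < y ^ (1 + α) := Real.rpow_pos_of_pos hy.1 _
      have h7 : 0 < c * y ^ (1 + α) := mul_pos hc h6
      have h8 : 0 < x ^ α * y := mul_pos hxa hy.1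
      rw [h3] at h4 ⊢
      have h9 := hy.1
      nlinarith
    by_contra hcon
    push Not at hcon
    set d := T x - x - (c + 1) * x ^ (1 + α) with hd
    have hdpos : 0 < d := by linarith
    have hm : min d 1 / 2 ∈ Ioo (0:ℝ) 1 :=
      ⟨by have := lt_min hdpos one_pos; linarith, by have := min_le_right d 1; linarith⟩
    obtain ⟨u, hu, hTu⟩ := h.branch1.surjOn hm
    have hy : min u (x/2) ∈ Ioo 0 x :=
      ⟨lt_min hu.1 (by linarith [hx.1]), (min_le_right _ _).trans_lt (by linarith [hx.1])⟩
    have h1 := key _ hy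
    have h2 : T (min u (x/2)) ≤ T u := (PM_Tmono h).monotoneOn
      ⟨hy.1.le, (min_le_left _ _).trans_lt hu.2⟩ ⟨hu.1.le, hu.2⟩ (min_le_left _ _)
    have := min_le_left d 1
    linarith
  refine ⟨c + 1 + 1 / r ^ (1 + α), by positivity, ?_⟩
  intro x hx
  have hrp : 0 < r ^ (1 + α) := Real.rpow_pos_of_pos hrpos _
  have hxp : 0 < x ^ (1 + α) := Real.rpow_pos_of_pos hx.1 _
  rcases lt_or_ge x r with hxr | hxr
  · have := hnear x ⟨hx.1, hxr⟩
    have h2 : 0 < 1 / r ^ (1 + α) * x ^ (1 + α) := by positivity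
    linarith
  · have h1 := (h.branch1.mapsTo hx).2
    have h2 : r ^ (1 + α) ≤ x ^ (1 + α) := Real.rpow_le_rpow hrpos.le hxr (by linarith [hα.1])
    have h3 : 1 ≤ 1 / r ^ (1 + α) * x ^ (1 + α) := by
      rw [one_div, inv_mul_eq_div, one_le_div hrp]; exact h2
    have h4 : 0 < (c + 1) * x ^ (1 + α) := by positivity
    have := hx.1
    linarith

section seqs
variable {T : ℝ → ℝ} {x₀ α : ℝ}

lemma PM_eps_mem {ε₀ : ℝ} (hε₀ : ε₀ ∈ Ioo 0 x₀) {eps : ℕ → ℝ} (heps0 : eps 0 = ε₀)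
    (hepsrec : ∀ k, eps (k+1) ∈ Ioo 0 ε₀ ∧ T (eps (k+1)) = eps k) (k : ℕ) :
    eps k ∈ Ioo 0 x₀ := by
  cases k with
  | zero => rw [heps0]; exact hε₀
  | succ k => exact ⟨(hepsrec k).1.1, (hepsrec k).1.2.trans hε₀.2⟩

lemma PM_eps_anti (h : PMHyp T x₀ α) {eps : ℕ → ℝ} (hm : ∀ k, eps k ∈ Ioo 0 x₀)
    (hr : ∀ k, T (eps (k+1)) = eps k) : Antitone eps :=
  antitone_nat_of_succ_le fun k => by
    have := PM_gt h (hm (k+1)); rw [hr] at this; exact this.le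

lemma PM_eps_tendsto (h : PMHyp T x₀ α) {eps : ℕ → ℝ} (hm : ∀ k, eps k ∈ Ioo 0 x₀)
    (hr : ∀ k, T (eps (k+1)) = eps k) : Tendsto eps atTop (𝓝 0) := by
  have ha := PM_eps_anti h hm hr
  have hb : BddBelow (range eps) := ⟨0, by rintro _ ⟨k, rfl⟩; exact (hm k).1.le⟩
  have ht := tendsto_atTop_ciInf ha hb
  set L := ⨅ k, eps k
  have hL0 : 0 ≤ L := le_ciInf fun k => (hm k).1.le
  have hL1 : L < x₀ := (ciInf_le hb 0).trans_lt (hm 0).2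
  rcases hL0.eq_or_lt with h0 | h0
  · rwa [← h0] at ht
  · exfalso
    have h1 : Tendsto (fun k => T (eps (k+1))) atTop (𝓝 (T L)) :=
      (PM_cont h L ⟨h0, hL1⟩).tendsto.comp (ht.comp (tendsto_add_atTop_nat 1))
    simp only [hr] at h1
    have h2 := tendsto_nhds_unique ht h1
    have h3 := PM_gt h (x := L) ⟨h0, hL1⟩
    linarith

lemma PM_eps_bound (h : PMHyp T x₀ α) {eps : ℕ → ℝ} (hm : ∀ k, eps k ∈ Ioo 0 x₀)
    (hr : ∀ k, T (eps (k+1)) = eps k) :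
    ∃ C : ℝ, 0 < C ∧ ∀ k, eps k - eps (k+1) ≤ C * eps k ^ (1+α) := by
  obtain ⟨C, hC, hb⟩ := PM_bound h
  refine ⟨C, hC, fun k => ?_⟩
  have h1 := hb _ (hm (k+1))
  rw [hr] at h1
  refine h1.trans ?_
  have := PM_eps_anti h hm hr (Nat.le_succ k)
  have h2 : eps (k+1) ^ (1+α) ≤ eps k ^ (1+α) :=
    Real.rpow_le_rpow (hm _).1.le this (by linarith [h.αmem.1])
  gcongr

lemma PM_ratio_one (h : PMHyp T x₀ α) {eps : ℕ → ℝ} (hm : ∀ k, eps k ∈ Ioo 0 x₀)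
    (hr : ∀ k, T (eps (k+1)) = eps k) :
    Tendsto (fun k => eps (k+1) / eps k) atTop (𝓝 1) := by
  obtain ⟨C, hC, hb⟩ := PM_eps_bound h hm hr
  have ht := PM_eps_tendsto h hm hr
  have hp : Tendsto (fun k => 1 - C * eps k ^ α) atTop (𝓝 1) := by
    have h1 := ht.rpow_const (p := α) (Or.inr h.αmem.1.le)
    rw [Real.zero_rpow h.αmem.1.ne'] at h1
    simpa using (h1.const_mul C).const_sub 1
  refine tendsto_of_tendsto_of_tendsto_of_le_of_le hp tendsto_const_nhds (fun k => ?_) fun k => ?_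
  · have h1 := hb k
    rw [Real.rpow_add (hm k).1, Real.rpow_one] at h1
    simp only
    rw [le_div_iff₀ (hm k).1]
    linarith
  · simp only
    rw [div_le_one (hm k).1]
    exact PM_eps_anti h hm hr (Nat.le_succ k)

lemma PM_ratio_m (h : PMHyp T x₀ α) {eps : ℕ → ℝ} (hm : ∀ k, eps k ∈ Ioo 0 x₀)
    (hr : ∀ k, T (eps (k+1)) = eps k) (m : ℕ) :
    Tendsto (fun k => eps (k+m) / eps k) atTop (𝓝 1) := by
  induction m with
  | zero =>
    have : (fun k => eps (k+0) / eps k) = fun _ => (1:ℝ) := by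
      funext k; exact div_self (hm k).1.ne'
    rw [this]; exact tendsto_const_nhds
  | succ m ih =>
    have h1 := ((PM_ratio_one h hm hr).comp (tendsto_add_atTop_nat m)).mul ih
    rw [one_mul] at h1
    refine h1.congr fun k => ?_
    simp only [Function.comp]
    have := (hm (k+m)).1.ne'
    have := (hm k).1.ne'
    rw [← add_assoc]
    field_simp

lemma PM_eta_ratio (h : PMHyp T x₀ α) {eps eta : ℕ → ℝ} (hm : ∀ k, eps k ∈ Ioo 0 x₀)
    (hr : ∀ k, T (eps (k+1)) = eps k) (hm' : ∀ k, eta k ∈ Ico 0 x₀)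
    (hr' : ∀ k, T (eta (k+1)) = eta k) (h0 : 0 < eta 0) (h1 : eta 0 ≤ eps 0) :
    Tendsto (fun k => eta k / eps k) atTop (𝓝 1) := by
  obtain ⟨m, hmm⟩ := ((PM_eps_tendsto h hm hr).eventually (gt_mem_nhds h0)).exists
  have hI : ∀ k, eps k ∈ Ico 0 x₀ := fun k => ⟨(hm k).1.le, (hm k).2⟩
  have hup : ∀ k, eta k ≤ eps k := by
    intro k
    induction k with
    | zero => exact h1
    | succ k ih =>
      rw [← hr, ← hr'] at ih
      exact ((PM_Tmono h).le_iff_le (hm' _) (hI _)).1 ih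
  have hlo : ∀ k, eps (k+m) ≤ eta k := by
    intro k
    induction k with
    | zero => rw [zero_add]; exact hmm.le
    | succ k ih =>
      rw [← hr, ← hr', add_right_comm] at ih
      exact ((PM_Tmono h).le_iff_le (hI _) (hm' _)).1 ih
  refine tendsto_of_tendsto_of_tendsto_of_le_of_le (PM_ratio_m h hm hr m)
    tendsto_const_nhds (fun k => ?_) fun k => ?_
  · exact div_le_div_of_nonneg_right (hlo k) (hm k).1.le
  · exact (div_le_one (hm k).1).2 (hup k)

end seqs

/-- The inverse of the left branch. -/
lemma PM_inv {T : ℝ → ℝ} {x₀ α : ℝ} (h : PMHyp T x₀ α) :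
    ∃ S : ℝ → ℝ, ∀ t ∈ Ico (0:ℝ) 1, S t ∈ Ico 0 x₀ ∧ T (S t) = t := by
  have : ∀ t : ℝ, ∃ s, t ∈ Ico (0:ℝ) 1 → s ∈ Ico 0 x₀ ∧ T s = t := by
    intro t
    by_cases ht : t ∈ Ico (0:ℝ) 1
    · rcases ht.1.eq_or_lt with h0 | h0
      · exact ⟨0, fun _ => ⟨⟨le_refl _, h.x₀mem.1⟩, by rw [h.T0, h0]⟩⟩
      · obtain ⟨u, hu, hTu⟩ := h.branch1.surjOn ⟨h0, ht.2⟩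
        exact ⟨u, fun _ => ⟨⟨hu.1.le, hu.2⟩, hTu⟩⟩
    · exact ⟨0, fun h' => absurd h' ht⟩
  choose S hS using this
  exact ⟨S, hS⟩

lemma PF_nonneg {T : ℝ → ℝ} {PT : (ℝ → ℝ) → ℝ → ℝ} (hPT : IsPFT T PT) {φ : ℝ → ℝ}
    (hφ : Integrable φ) (h0 : ∀ᵐ z, 0 ≤ φ z) :
    ∀ᵐ z ∂(volume.restrict (Icc (0:ℝ) 1)), 0 ≤ PT φ z := by
  obtain ⟨h1, h2⟩ := hPT φ hφ.integrableOn
  apply ae_nonneg_of_forall_setIntegral_nonneg h1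
  intro s hs _
  rw [Measure.restrict_restrict hs, h2 _ inter_subset_right (hs.inter measurableSet_Icc)]
  exact integral_nonneg_of_ae (ae_restrict_of_ae h0)

/-- The conditioned densities: the invariant carried along the induction. -/
lemma PF_inv {T : ℝ → ℝ} {x₀ α : ℝ} (hPM : PMHyp T x₀ α)
    {PT : (ℝ → ℝ) → ℝ → ℝ} (hPT : IsPFT T PT)
    {ε₀ : ℝ} (hε₀ : ε₀ ∈ Set.Ioo 0 x₀) {S : ℝ → ℝ}
    (hS : ∀ t ∈ Ico (0:ℝ) 1, S t ∈ Ico 0 x₀ ∧ T (S t) = t)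
    {ψ : ℕ → ℝ → ℝ}
    (hψ0 : ψ 0 = (Set.Icc 0 ε₀).indicator fun _ => 1)
    (hψrec : ∀ k, ψ (k+1) = fun z =>
      condPF1 PT (Set.Icc 0 ε₀) (ψ k) z /
        ∫ y in Set.Icc (0:ℝ) 1, |condPF1 PT (Set.Icc 0 ε₀) (ψ k) y|) (k : ℕ) :
    Integrable (ψ k) ∧ (∀ᵐ z, 0 ≤ ψ k z) ∧ (∀ z, z ∉ Icc 0 ε₀ → ψ k z = 0) ∧
      0 < S^[k] ε₀ ∧ S^[k] 0 = 0 ∧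
      ∀ t ∈ Icc 0 ε₀, ∫ z in Icc t ε₀, ψ k z = (S^[k] ε₀ - S^[k] t) /
        (if k = 0 then 1 else S^[k] ε₀) := by
  have hx1 := hPM.x₀mem.2
  have hε1 : ε₀ < 1 := hε₀.2.trans hx1
  have hmono := PM_Tmono hPM
  have h0m : (0:ℝ) ∈ Ico 0 x₀ := ⟨le_refl _, hPM.x₀mem.1⟩
  have hS0 : S 0 = 0 := by
    obtain ⟨h1, h2⟩ := hS 0 ⟨le_refl _, one_pos⟩
    exact hmono.injOn h1 h0m (h2.trans hPM.T0.symm)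
  have hSpos : ∀ t ∈ Ioo (0:ℝ) 1, 0 < S t ∧ S t < t := by
    intro t ht
    obtain ⟨h1, h2⟩ := hS t ⟨ht.1.le, ht.2⟩
    have h3 : 0 < S t := by
      rcases h1.1.eq_or_lt with h | h
      · rw [← h, hPM.T0] at h2; linarith [ht.1]
      · exact h
    have := PM_gt hPM ⟨h3, h1.2⟩
    rw [h2] at this
    exact ⟨h3, this⟩
  have hSmono : ∀ s ∈ Ico (0:ℝ) 1, ∀ t ∈ Ico (0:ℝ) 1, s ≤ t → S s ≤ S t := by
    intro s hs t ht hst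
    have a := hS s hs
    have b := hS t ht
    rw [← a.2, ← b.2] at hst
    exact (hmono.le_iff_le a.1 b.1).1 hst
  have hε01 : ε₀ ∈ Ico (0:ℝ) 1 := ⟨hε₀.1.le, hε1⟩
  have hSitpos : ∀ j, 0 < S^[j] ε₀ ∧ S^[j] ε₀ ≤ ε₀ := by
    intro j
    induction j with
    | zero => exact ⟨hε₀.1, le_refl _⟩
    | succ j ih =>
      rw [Function.iterate_succ_apply']
      have := hSpos _ ⟨ih.1, ih.2.trans_lt hε1⟩
      exact ⟨this.1, this.2.le.trans ih.2⟩
  have hSit0 : ∀ j, S^[j] 0 = 0 := fun j => Function.iterate_fixed hS0 j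
  have hSε := hSpos ε₀ ⟨hε₀.1, hε1⟩
  have hsub : Icc 0 ε₀ ⊆ Icc (0:ℝ) 1 := Icc_subset_Icc_right hε1.le
  induction k with
  | zero =>
    refine ⟨?_, ?_, ?_, hε₀.1, rfl, ?_⟩
    · rw [hψ0, integrable_indicator_iff measurableSet_Icc]
      exact integrableOn_const (by simp)
    · refine Eventually.of_forall fun z => ?_
      rw [hψ0]
      exact indicator_nonneg (fun _ _ => zero_le_one) z
    · intro z hz
      rw [hψ0, indicator_of_notMem hz]
    · intro t ht
      rw [hψ0, setIntegral_indicator measurableSet_Icc,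
        inter_eq_left.2 (Icc_subset_Icc_left ht.1)]
      simp [(sub_nonneg.2 ht.2)]
  | succ k ih =>
    obtain ⟨hint, hnn, hsupp, -, -, hform⟩ := ih
    set n : ℝ := if k = 0 then 1 else S^[k] ε₀ with hn
    have hnpos : 0 < n := by
      rw [hn]; split_ifs
      · exact one_pos
      · exact (hSitpos k).1
    have hind : (Icc 0 ε₀).indicator (ψ k) = ψ k := by
      rw [indicator_eq_self]
      intro z hz
      by_contra hc
      exact hz (hsupp z hc)
    obtain ⟨hPi, hPs⟩ := hPT (ψ k) hint.integrableOn
    have hPn := PF_nonneg hPT hint hnn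
    have hcond : condPF1 PT (Icc 0 ε₀) (ψ k) = (Icc 0 ε₀).indicator (PT (ψ k)) := by
      rw [condPF1, hind]
    have hPint : ∀ t ∈ Icc 0 ε₀, ∫ z in Icc t ε₀, PT (ψ k) z =
        (S^[k+1] ε₀ - S^[k+1] t) / n := by
      intro t ht
      have ht1 : t ∈ Ico (0:ℝ) 1 := ⟨ht.1, ht.2.trans_lt hε1⟩
      have hSt := hSmono t ht1 _ hε01 ht.2
      have hSt0 := (hS t ht1).1.1
      rw [hPs _ ((Icc_subset_Icc_left ht.1).trans hsub) measurableSet_Icc]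
      have e1 : ∫ z in T ⁻¹' Icc t ε₀ ∩ Icc 0 1, ψ k z = ∫ z in Icc (S t) (S ε₀), ψ k z := by
        have e0 : T ⁻¹' Icc t ε₀ ∩ Icc 0 1 ∩ Icc 0 ε₀ = Icc (S t) (S ε₀) := by
          have a := hS t ht1
          have b := hS _ hε01
          ext z
          constructor
          · rintro ⟨⟨⟨hz1, hz2⟩, -⟩, hz3⟩
            have hz : z ∈ Ico 0 x₀ := ⟨hz3.1, hz3.2.trans_lt hε₀.2⟩
            constructor
            · rw [← hmono.le_iff_le a.1 hz, a.2]; exact hz1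
            · rw [← hmono.le_iff_le hz b.1, b.2]; exact hz2
          · rintro ⟨hz1, hz2⟩
            have hz0 : 0 ≤ z := hSt0.trans hz1
            have hzε : z ≤ ε₀ := hz2.trans hSε.2.le
            have hz : z ∈ Ico 0 x₀ := ⟨hz0, hzε.trans_lt hε₀.2⟩
            refine ⟨⟨⟨?_, ?_⟩, hz0, hzε.trans hε1.le⟩, hz0, hzε⟩
            · rw [← hmono.le_iff_le a.1 hz, a.2] at hz1; exact hz1
            · rw [← hmono.le_iff_le hz b.1, b.2] at hz2; exact hz2
        conv_lhs => rw [← hind]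
        rw [setIntegral_indicator measurableSet_Icc, e0]
      have e2 : ∫ z in Icc (S t) ε₀, ψ k z =
          (∫ z in Icc (S t) (S ε₀), ψ k z) + ∫ z in Icc (S ε₀) ε₀, ψ k z := by
        simp only [integral_Icc_eq_integral_Ioc]
        rw [← setIntegral_union (Ioc_disjoint_Ioc_of_le (le_refl _)) measurableSet_Ioc
          hint.integrableOn hint.integrableOn, Ioc_union_Ioc_eq_Ioc hSt hSε.2.le]
      rw [hform _ ⟨hSt0, hSt.trans hSε.2.le⟩, hform _ ⟨hSε.1.le, hSε.2.le⟩,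
        ← Function.iterate_succ_apply, ← Function.iterate_succ_apply] at e2
      rw [e1, eq_sub_iff_add_eq.2 e2.symm]
      simp only [Nat.succ_eq_add_one]
      ring
    have hnorm : ∫ y in Icc (0:ℝ) 1, |condPF1 PT (Icc 0 ε₀) (ψ k) y| =
        S^[k+1] ε₀ / n := by
      have h1 : (fun y => |condPF1 PT (Icc 0 ε₀) (ψ k) y|) =
          (Icc 0 ε₀).indicator fun y => |PT (ψ k) y| := by
        funext y
        rw [hcond]
        by_cases hy : y ∈ Icc 0 ε₀
        · rw [indicator_of_mem hy, indicator_of_mem hy]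
        · rw [indicator_of_notMem hy, indicator_of_notMem hy, abs_zero]
      rw [h1, setIntegral_indicator measurableSet_Icc, inter_eq_right.2 hsub]
      have h2 : ∫ y in Icc 0 ε₀, |PT (ψ k) y| = ∫ y in Icc 0 ε₀, PT (ψ k) y := by
        apply integral_congr_ae
        filter_upwards [ae_restrict_of_ae_restrict_of_subset hsub hPn] with z hz
        exact abs_of_nonneg hz
      rw [h2, hPint 0 ⟨le_refl _, hε₀.1.le⟩, hSit0, sub_zero]
    have hne : 0 < S^[k+1] ε₀ / n := div_pos (hSitpos _).1 hnpos
    have hψ : ψ (k+1) = fun z => (Icc 0 ε₀).indicator (PT (ψ k)) z / (S^[k+1] ε₀ / n) := by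
      rw [hψrec, hnorm, hcond]
    refine ⟨?_, ?_, ?_, (hSitpos _).1, hSit0 _, ?_⟩
    · rw [hψ]
      apply Integrable.div_const
      rw [integrable_indicator_iff measurableSet_Icc]
      exact hPi.mono_set hsub
    · rw [ae_restrict_iff' measurableSet_Icc] at hPn
      filter_upwards [hPn] with z hz
      rw [hψ]
      refine div_nonneg ?_ hne.le
      by_cases hz' : z ∈ Icc 0 ε₀
      · rw [indicator_of_mem hz']; exact hz (hsub hz')
      · rw [indicator_of_notMem hz']
    · intro z hz
      rw [hψ]; simp only; rw [indicator_of_notMem hz, zero_div]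
    · intro t ht
      rw [hψ, integral_div, setIntegral_indicator measurableSet_Icc,
        inter_eq_left.2 (Icc_subset_Icc_left ht.1), hPint t ht]
      have := hnpos.ne'
      have := (hSitpos (k+1)).1.ne'
      rw [if_neg (Nat.succ_ne_zero k)]
      field_simp

lemma weak_conv {ε₀ : ℝ} {ψ : ℕ → ℝ → ℝ} (hε₀ : 0 < ε₀)
    (hint : ∀ k, Integrable (ψ k)) (hnn : ∀ k, ∀ᵐ z, 0 ≤ ψ k z)
    (hsupp : ∀ k z, z ∉ Icc 0 ε₀ → ψ k z = 0)
    (hone : ∀ k, ∫ z in Icc 0 ε₀, ψ k z = 1)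
    (htail : ∀ t ∈ Ioo 0 ε₀, Tendsto (fun k => ∫ z in Icc t ε₀, ψ k z) atTop (𝓝 0))
    (f : BoundedContinuousFunction ℝ ℝ) :
    Tendsto (fun k => ∫ z, f z
          ∂(volume.withDensity fun z => ENNReal.ofReal (ψ k z)))
        atTop (𝓝 (f 0)) := by
  have hf : ∀ k, Integrable (fun z => ψ k z * (f z - f 0)) := by
    intro k
    refine (hint k).mul_bdd (c := ‖f‖ + ‖f‖)
      ((f.continuous.sub continuous_const).aestronglyMeasurable) ?_
    exact Eventually.of_forall fun z => (norm_sub_le _ _).trans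
      (add_le_add (f.norm_coe_le_norm _) (f.norm_coe_le_norm _))
  have hone' : ∀ k, ∫ z, ψ k z = 1 := by
    intro k
    rw [← hone k, setIntegral_eq_integral_of_forall_compl_eq_zero (hsupp k)]
  have hrew : ∀ k, ∫ z, f z ∂(volume.withDensity fun z => ENNReal.ofReal (ψ k z)) =
      (∫ z, ψ k z * (f z - f 0)) + f 0 := by
    intro k
    rw [integral_withDensity_eq_integral_toReal_smul₀ (hint k).aemeasurable.ennreal_ofReal
      (Eventually.of_forall fun z => ENNReal.ofReal_lt_top)]
    have h1 : ∫ z, (ENNReal.ofReal (ψ k z)).toReal • f z =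
        ∫ z, (ψ k z * (f z - f 0) + ψ k z * f 0) := by
      apply integral_congr_ae
      filter_upwards [hnn k] with z hz
      rw [ENNReal.toReal_ofReal hz, smul_eq_mul]; ring
    rw [h1, integral_add (hf k) ((hint k).mul_const _), integral_mul_const, hone', one_mul]
  simp only [hrew]
  suffices h : Tendsto (fun k => ∫ z, ψ k z * (f z - f 0)) atTop (𝓝 0) by
    simpa using h.add_const (f 0)
  rw [Metric.tendsto_atTop]
  intro e he
  obtain ⟨r, hr, hfr⟩ := Metric.continuous_iff.1 f.continuous 0 (e/2) (by linarith)
  set t := min (r/2) (ε₀/2) with htdef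
  have ht0 : 0 < t := lt_min (by linarith) (by linarith)
  have htr : t < r := (min_le_left _ _).trans_lt (by linarith)
  have htε : t < ε₀ := (min_le_right _ _).trans_lt (by linarith)
  have hlim := (htail t ⟨ht0, htε⟩).const_mul (2 * ‖f‖)
  rw [mul_zero] at hlim
  obtain ⟨N, hN⟩ := eventually_atTop.1 (hlim.eventually (gt_mem_nhds (half_pos he)))
  refine ⟨N, fun k hk => ?_⟩
  rw [Real.dist_eq, sub_zero, ← Real.norm_eq_abs]
  have hindI : Integrable (fun z => 2 * ‖f‖ * (Icc t ε₀).indicator (ψ k) z) :=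
    ((hint k).indicator measurableSet_Icc).const_mul _
  have hb : ‖∫ z, ψ k z * (f z - f 0)‖ ≤
      ∫ z, (e/2 * ψ k z + 2 * ‖f‖ * (Icc t ε₀).indicator (ψ k) z) := by
    refine norm_integral_le_of_norm_le (((hint k).const_mul _).add hindI) ?_
    filter_upwards [hnn k] with z hz
    rw [norm_mul, Real.norm_eq_abs (ψ k z), abs_of_nonneg hz]
    by_cases hzm : z ∈ Icc t ε₀
    · rw [indicator_of_mem hzm]
      have h1 : ‖f z - f 0‖ ≤ 2 * ‖f‖ := by
        have h2 := norm_sub_le (f z) (f 0)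
        have h3 := f.norm_coe_le_norm z
        have h4 := f.norm_coe_le_norm 0
        linarith
      have h5 := mul_le_mul_of_nonneg_left h1 hz
      have h6 := mul_nonneg he.le hz
      linarith
    · rw [indicator_of_notMem hzm, mul_zero, add_zero]
      by_cases hz0 : z ∈ Icc 0 ε₀
      · have hzt : z < t := by
          by_contra hc
          exact hzm ⟨not_lt.1 hc, hz0.2⟩
        have h1 := hfr z (by rw [Real.dist_eq, sub_zero, abs_of_nonneg hz0.1]; linarith)
        rw [dist_eq_norm] at h1
        have h5 := mul_le_mul_of_nonneg_left h1.le hz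
        linarith
      · rw [hsupp k z hz0]; simp
  refine hb.trans_lt ?_
  rw [integral_add ((hint k).const_mul _) hindI, integral_const_mul, integral_const_mul,
    hone', integral_indicator measurableSet_Icc]
  have := hN k hk
  linarith

/-- Fix `ε₀ ∈ (0,x₀)` and `η₀ ∈ [0,ε₀)`, and define `ε_k`,
`η_k` by pulling back along the left branch of `T`. Then `ε_k → 0`; the
differences `ε_k − ε_{k+1}` are decreasing; `ε_k − ε_{k+1} ≤ C ε_k^{1+α}`;
`(ε_k − η_k)/ε_k → 0`, i.e. `η_k/ε_k → 1`; and the probability measures with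
densities `(P̃_{[0,ε₀]})^k χ_{[0,ε₀]}` converge weakly to `δ₀`. -/
theorem statement16 (T : ℝ → ℝ) (x₀ α : ℝ) (hPM : PMHyp T x₀ α)
    (PT : (ℝ → ℝ) → ℝ → ℝ) (hPT : IsPFT T PT)
    (ε₀ η₀ : ℝ) (hε₀ : ε₀ ∈ Set.Ioo 0 x₀) (hη₀ : η₀ ∈ Set.Ico 0 ε₀)
    (eps eta : ℕ → ℝ) (heps0 : eps 0 = ε₀) (heta0 : eta 0 = η₀)
    (hepsrec : ∀ k, eps (k+1) ∈ Set.Ioo 0 ε₀ ∧ T (eps (k+1)) = eps k)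
    (hetarec : ∀ k, eta (k+1) ∈ Set.Ico 0 ε₀ ∧ T (eta (k+1)) = eta k)
    (ψ : ℕ → ℝ → ℝ)
    (hψ0 : ψ 0 = (Set.Icc 0 ε₀).indicator fun _ => 1)
    (hψrec : ∀ k, ψ (k+1) = fun z =>
      condPF1 PT (Set.Icc 0 ε₀) (ψ k) z /
        ∫ y in Set.Icc (0:ℝ) 1, |condPF1 PT (Set.Icc 0 ε₀) (ψ k) y|) :
    Tendsto eps atTop (𝓝 0) ∧
    Antitone (fun k => eps k - eps (k+1)) ∧
    (∃ C : ℝ, 0 < C ∧ ∀ k, eps k - eps (k+1) ≤ C * eps k ^ (1+α)) ∧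
    (0 < η₀ →
      Tendsto (fun k => (eps k - eta k) / eps k) atTop (𝓝 0) ∧
      Tendsto (fun k => eta k / eps k) atTop (𝓝 1)) ∧
    (∀ f : BoundedContinuousFunction ℝ ℝ,
      Tendsto (fun k => ∫ z, f z
          ∂(volume.withDensity fun z => ENNReal.ofReal (ψ k z)))
        atTop (𝓝 (f 0))) := by
  have hm := PM_eps_mem hε₀ heps0 hepsrec
  have hr := fun k => (hepsrec k).2
  have hx1 := hPM.x₀mem.2
  refine ⟨PM_eps_tendsto hPM hm hr, ?_, PM_eps_bound hPM hm hr, ?_, ?_⟩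
  · refine antitone_nat_of_succ_le fun k => ?_
    have h1 := (PM_strictMono hPM).monotoneOn ⟨(hm (k+2)).1.le, (hm (k+2)).2⟩
      ⟨(hm (k+1)).1.le, (hm (k+1)).2⟩ (PM_eps_anti hPM hm hr (Nat.le_succ (k+1)))
    simp only [hr] at h1
    exact h1
  · intro hpos
    have hm' : ∀ k, eta k ∈ Ico 0 x₀ := by
      intro k
      cases k with
      | zero => rw [heta0]; exact ⟨hη₀.1, hη₀.2.trans hε₀.2⟩
      | succ k => exact ⟨(hetarec k).1.1, (hetarec k).1.2.trans hε₀.2⟩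
    have h1 := PM_eta_ratio hPM hm hr hm' (fun k => (hetarec k).2) (by rw [heta0]; exact hpos)
      (by rw [heta0, heps0]; exact hη₀.2.le)
    refine ⟨?_, h1⟩
    have h2 := h1.const_sub 1
    rw [sub_self] at h2
    refine h2.congr fun k => ?_
    rw [sub_div, div_self (hm k).1.ne']
  · obtain ⟨S, hS⟩ := PM_inv hPM
    have hI := PF_inv hPM hPT hε₀ hS hψ0 hψrec
    have hSmem : ∀ t ∈ Ioo 0 x₀, ∀ k, S^[k] t ∈ Ico 0 x₀ := by
      intro t ht k
      induction k with
      | zero => exact ⟨ht.1.le, ht.2⟩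
      | succ k ih =>
        rw [Function.iterate_succ_apply']
        exact (hS _ ⟨ih.1, ih.2.trans hx1⟩).1
    have hSrec : ∀ t ∈ Ioo 0 x₀, ∀ k, T (S^[k+1] t) = S^[k] t := by
      intro t ht k
      rw [Function.iterate_succ_apply']
      have := hSmem t ht k
      exact (hS _ ⟨this.1, this.2.trans hx1⟩).2
    intro f
    rw [← tendsto_add_atTop_iff_nat 1]
    refine weak_conv (ψ := fun k => ψ (k+1)) hε₀.1 (fun k => (hI _).1) (fun k => (hI _).2.1)
      (fun k => (hI _).2.2.1) ?_ ?_ f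
    · intro k
      obtain ⟨-, -, -, hp, h0, hf⟩ := hI (k+1)
      rw [if_neg (Nat.succ_ne_zero k)] at hf
      rw [hf 0 ⟨le_refl _, hε₀.1.le⟩, h0, sub_zero, div_self hp.ne']
    · intro t ht
      have ht' : t ∈ Ioo 0 x₀ := ⟨ht.1, ht.2.trans hε₀.2⟩
      have h1 := PM_eta_ratio hPM (eps := fun k => S^[k] ε₀) (eta := fun k => S^[k] t)
        (fun k => ⟨(hI k).2.2.2.1, (hSmem _ hε₀ k).2⟩) (hSrec _ hε₀) (hSmem t ht') (hSrec t ht')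
        ht.1 ht.2.le
      have h2 := (h1.comp (tendsto_add_atTop_nat 1)).const_sub 1
      rw [sub_self] at h2
      refine h2.congr fun k => ?_
      obtain ⟨-, -, -, hp, h0, hf⟩ := hI (k+1)
      rw [if_neg (Nat.succ_ne_zero k)] at hf
      simp only [Function.comp]
      rw [hf t ⟨ht.1.le, ht.2.le⟩, sub_div, div_self hp.ne']
end

section
/- For ε₀ ∈ (0,x₀) define the two-state transition probabilities with respect to Lebesgue measure: a_{ε₀} = Leb([0,ε₀] ∩ T⁻¹((ε₀,1]))/ε₀ = (ε₀ − T_left⁻¹(ε₀))/ε₀ (where T_left⁻¹ is the inverse of the left branch of T) and b_{ε₀} = Leb((ε₀,1] ∩ T⁻¹([0,ε₀]))/(1−ε₀). Then: (i) a_{ε₀} ∼ ε₀^α, i.e. there exist constants 0 < k₁ ≤ k₂ and δ > 0 such that k₁·ε₀^α ≤ a_{ε₀} ≤ k₂·ε₀^α for all ε₀ ∈ (0,δ); and (ii) lim_{ε₀→0⁺} b_{ε₀}/ε₀ = lim_{x→x₀⁺} 1/T′(x). -/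
open MeasureTheory Set Filter Topology
open scoped Classical

lemma pm_tendsto {f : ℝ → ℝ} {a b : ℝ} (hb : Set.BijOn f (Set.Ioo a b) (Set.Ioo 0 1))
    (hm : StrictMonoOn f (Set.Ioo a b)) : Tendsto f (𝓝[>] a) (𝓝 0) := by
  rw [Metric.tendsto_nhds]
  intro ε hε
  have hmem : min ε 1 / 2 ∈ Set.Ioo (0:ℝ) 1 := by
    have h1 : 0 < min ε 1 := lt_min hε one_pos
    have h2 : min ε 1 ≤ 1 := min_le_right _ _
    constructor <;> linarith
  obtain ⟨w, hw, hfw⟩ := hb.surjOn hmem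
  filter_upwards [Ioo_mem_nhdsGT hw.1] with x hx
  have hx' : x ∈ Set.Ioo a b := ⟨hx.1, hx.2.trans hw.2⟩
  have h1 := (hb.mapsTo hx').1
  have h2 := hm hx' hw hx.2
  have h3 : min ε 1 ≤ ε := min_le_left _ _
  rw [Real.dist_eq, sub_zero, abs_of_pos h1]
  linarith [hmem.1]

lemma pm_diff1 {T : ℝ → ℝ} {x₀ α : ℝ} (h : PMHyp T x₀ α) :
    ∀ x ∈ Set.Ioo 0 x₀, DifferentiableAt ℝ T x := by
  intro x hx
  have h1 := (h.smooth1 (x/2) (by linarith [hx.1])).differentiableOn (by norm_num)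
  exact h1.differentiableAt (Ioo_mem_nhds (by linarith [hx.1]) hx.2)

lemma pm_diff2 {T : ℝ → ℝ} {x₀ α : ℝ} (h : PMHyp T x₀ α) :
    ∀ x ∈ Set.Ioo x₀ 1, DifferentiableAt ℝ T x := by
  intro x hx
  exact (h.smooth2.differentiableOn (by norm_num)).differentiableAt (Ioo_mem_nhds hx.1 hx.2)

lemma pm_mono {T : ℝ → ℝ} {a b : ℝ} (hd : ∀ x ∈ Set.Ioo a b, DifferentiableAt ℝ T x)
    (he : ∀ x ∈ Set.Ioo a b, 1 < deriv T x) : StrictMonoOn (fun x => T x - x) (Set.Ioo a b) := by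
  apply strictMonoOn_of_deriv_pos (convex_Ioo a b)
  · intro x hx
    exact ((hd x hx).sub differentiableAt_id).continuousAt.continuousWithinAt
  · intro x hx
    rw [interior_Ioo] at hx
    have := ((hd x hx).hasDerivAt.sub (hasDerivAt_id x)).deriv
    have h2 : deriv (fun x => T x - x) x = deriv T x - 1 := this
    rw [h2]
    linarith [he x hx]

lemma pm_mono' {T : ℝ → ℝ} {a b : ℝ} (hd : ∀ x ∈ Set.Ioo a b, DifferentiableAt ℝ T x)
    (he : ∀ x ∈ Set.Ioo a b, 1 < deriv T x) : StrictMonoOn T (Set.Ioo a b) := by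
  intro x hx y hy hxy
  have := pm_mono hd he hx hy hxy
  simp only at this
  linarith

lemma pm_gt {T : ℝ → ℝ} {x₀ α : ℝ} (h : PMHyp T x₀ α) :
    ∀ x ∈ Set.Ioo 0 x₀, x < T x := by
  have hm := pm_mono (pm_diff1 h) (fun x hx => h.expand x (Or.inl hx))
  have hge : ∀ x ∈ Set.Ioo 0 x₀, x ≤ T x := by
    intro x hx
    by_contra! hlt
    have hw : min x (x - T x) / 2 ∈ Set.Ioo 0 x₀ := by
      have h1 : 0 < min x (x - T x) := lt_min hx.1 (by linarith)
      have h2 : min x (x - T x) ≤ x := min_le_left _ _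
      exact ⟨by linarith, by linarith [hx.2]⟩
    have h2 : min x (x - T x) ≤ x := min_le_left _ _
    have h3 : min x (x - T x) ≤ x - T x := min_le_right _ _
    have h4 := hm hw hx (by linarith [hw.1])
    have h5 := (h.branch1.mapsTo hw).1
    simp only at h4
    linarith
  intro x hx
  have hw : x / 2 ∈ Set.Ioo 0 x₀ := ⟨by linarith [hx.1], by linarith [hx.1, hx.2]⟩
  have h4 := hm hw hx (by linarith [hx.1])
  simp only at h4
  linarith [hge _ hw]

lemma pm_part1 {T : ℝ → ℝ} {x₀ α : ℝ} (h : PMHyp T x₀ α) :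
    ∃ k₁ k₂ δ : ℝ, 0 < k₁ ∧ k₁ ≤ k₂ ∧ 0 < δ ∧
      ∀ e ∈ Set.Ioo (0:ℝ) δ, ∀ y ∈ Set.Ioo (0:ℝ) x₀, T y = e →
        k₁ * e ^ α ≤ (e - y) / e ∧ (e - y) / e ≤ k₂ * e ^ α := by
  have hm := pm_mono' (pm_diff1 h) (fun x hx => h.expand x (Or.inl hx))
  have hT0 := pm_tendsto h.branch1 hm
  obtain ⟨c, hc, g, δ, hδ, hform, hg, hg'⟩ := h.form
  have hα := h.αmem
  have hx₀ := h.x₀mem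
  have hid : Tendsto (fun x : ℝ => x) (𝓝[>] 0) (𝓝 0) := tendsto_nhdsWithin_of_tendsto_nhds tendsto_id
  have hpow : Tendsto (fun x : ℝ => x ^ (1+α)) (𝓝[>] 0) (𝓝 0) := by
    have : ContinuousAt (fun x : ℝ => x ^ (1+α)) 0 :=
      Real.continuousAt_rpow_const _ _ (Or.inr (by linarith [hα.1]))
    have h2 := this.tendsto
    simp only [Real.zero_rpow (show 1 + α ≠ 0 by linarith [hα.1])] at h2
    exact tendsto_nhdsWithin_of_tendsto_nhds h2
  have hg0 : Tendsto g (𝓝[>] 0) (𝓝 0) := by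
    have h1 : Tendsto (fun x => T x - x - c * x ^ (1+α)) (𝓝[>] 0) (𝓝 0) := by
      simpa using (hT0.sub hid).sub (hpow.const_mul c)
    refine h1.congr' ?_
    filter_upwards [Ioo_mem_nhdsGT hδ] with x hx
    rw [hform x ⟨hx.1.le, hx.2⟩]; ring
  have hev : ∀ᶠ x in 𝓝[>] (0:ℝ), |deriv g x / x ^ α| < c / 2 := by
    have := hg'.abs
    rw [abs_zero] at this
    exact this.eventually (gt_mem_nhds (by linarith))
  obtain ⟨r, hr, hr'⟩ := (mem_nhdsGT_iff_exists_Ioo_subset).1 hev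
  have hr0 : 0 < r := hr
  set s := min (min r δ) x₀ with hs
  have hs0 : 0 < s := lt_min (lt_min hr0 hδ) hx₀.1
  have hsr : s ≤ r := (min_le_left _ _).trans (min_le_left _ _)
  have hsδ : s ≤ δ := (min_le_left _ _).trans (min_le_right _ _)
  have hsx : s ≤ x₀ := min_le_right _ _
  have hbd : ∀ x ∈ Set.Ioo 0 s, |g x| ≤ c / 2 * x ^ (1+α) := by
    intro x hx
    have hxα : 0 < x ^ α := Real.rpow_pos_of_pos hx.1 _
    have hlip : ∀ w ∈ Set.Ioo 0 x, |g x - g w| ≤ c / 2 * x ^ α * x := by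
      intro w hw
      have := (convex_Icc w x).norm_image_sub_le_of_norm_deriv_le (f := g) (C := c / 2 * x ^ α)
        (x := w) (y := x) ?_ ?_ ⟨le_rfl, hw.2.le⟩ ⟨hw.2.le, le_rfl⟩
      · rw [Real.norm_eq_abs, Real.norm_eq_abs, abs_of_pos (sub_pos.2 hw.2)] at this
        refine this.trans ?_
        apply mul_le_mul_of_nonneg_left (by linarith [hw.1]) (by positivity)
      · intro t ht
        exact (hg.differentiableOn (by norm_num)).differentiableAt
          (Ioo_mem_nhds (hw.1.trans_le ht.1) (ht.2.trans_lt (hx.2.trans_le hsδ)))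
      · intro t ht
        have ht0 : 0 < t := hw.1.trans_le ht.1
        have htα : 0 < t ^ α := Real.rpow_pos_of_pos ht0 _
        have h1 : |deriv g t / t ^ α| < c / 2 := hr' ⟨ht0, ht.2.trans_lt (hx.2.trans_le hsr)⟩
        rw [abs_div, abs_of_pos htα, div_lt_iff₀ htα] at h1
        rw [Real.norm_eq_abs]
        refine h1.le.trans ?_
        exact mul_le_mul_of_nonneg_left (Real.rpow_le_rpow ht0.le ht.2 hα.1.le) (by linarith)
    have hl : Tendsto (fun w => |g x - g w|) (𝓝[>] 0) (𝓝 |g x - 0|) :=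
      (tendsto_const_nhds.sub hg0).abs
    have h2 := le_of_tendsto hl (by
      filter_upwards [Ioo_mem_nhdsGT hx.1] with w hw using hlip w hw)
    rw [sub_zero] at h2
    rw [add_comm, Real.rpow_add hx.1, Real.rpow_one]
    linarith
  have hs2 : s / 2 ∈ Set.Ioo 0 x₀ := ⟨by linarith, by linarith⟩
  set K := 1 + 3 * c / 2 with hK
  have hK1 : 1 < K := by rw [hK]; linarith
  have hK0 : 0 < K := by linarith
  have hKp : 1 ≤ K ^ (1 + α) := Real.one_le_rpow hK1.le (by linarith [hα.1])
  refine ⟨c / 2 / K ^ (1+α), 3 * c / 2, T (s/2), by positivity, ?_, (h.branch1.mapsTo hs2).1, ?_⟩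
  · have : c / 2 / K ^ (1+α) ≤ c / 2 := div_le_self (by linarith) hKp
    linarith
  intro e he y hy hye
  have hys : y < s / 2 := by
    by_contra! hcon
    have := hm.monotoneOn hs2 hy hcon
    linarith [he.2]
  have hy0 := hy.1
  have he0 := he.1
  have hb := abs_le.1 (hbd y ⟨hy0, by linarith⟩)
  have hf := hform y ⟨hy0.le, by linarith⟩
  rw [hye] at hf
  have hyp : 0 < y ^ (1+α) := Real.rpow_pos_of_pos hy0 _
  have hyα : y ^ (1+α) = y * y ^ α := by rw [Real.rpow_add hy0, Real.rpow_one]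
  have heα : e ^ (1+α) = e * e ^ α := by rw [Real.rpow_add he0, Real.rpow_one]
  have hyle : y ^ (1+α) ≤ y := by
    calc y ^ (1+α) ≤ y ^ (1:ℝ) :=
          Real.rpow_le_rpow_of_exponent_ge hy0 (by linarith [hy.2, hx₀.2]) (by linarith [hα.1])
      _ = y := Real.rpow_one y
  have hye' : y ≤ e := by nlinarith
  have heK : e ≤ K * y := by rw [hK]; nlinarith
  constructor
  · rw [le_div_iff₀ he0]
    have h1 : e ^ (1+α) ≤ K ^ (1+α) * y ^ (1+α) := by
      rw [← Real.mul_rpow hK0.le hy0.le]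
      exact Real.rpow_le_rpow he0.le heK (by linarith [hα.1])
    have h2 : c / 2 / K ^ (1+α) * e ^ α * e = c / 2 * (e ^ (1+α) / K ^ (1+α)) := by
      rw [heα]; ring
    have h3 : e ^ (1+α) / K ^ (1+α) ≤ y ^ (1+α) := by
      rw [div_le_iff₀ (by positivity)]; linarith
    rw [h2]
    nlinarith
  · rw [div_le_iff₀ he0]
    have h1 : y ^ (1+α) ≤ e ^ (1+α) := Real.rpow_le_rpow hy0.le hye' (by linarith [hα.1])
    have h2 : 3 * c / 2 * e ^ α * e = 3 * c / 2 * e ^ (1+α) := by rw [heα]; ring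
    rw [h2]
    nlinarith

lemma pm_part2 {T : ℝ → ℝ} {x₀ α D : ℝ} (h : PMHyp T x₀ α)
    (hD : Tendsto (deriv T) (𝓝[>] x₀) (𝓝 D)) (hD1 : 1 ≤ D) :
    Tendsto
      (fun e => ((volume (Set.Ioc e 1 ∩ T ⁻¹' (Set.Icc 0 e))).toReal / (1 - e)) / e)
      (𝓝[>] (0:ℝ)) (𝓝 D⁻¹) := by
  have hd := pm_diff2 h
  have hm := pm_mono' hd (fun x hx => h.expand x (Or.inr hx))
  have hT0 := pm_tendsto h.branch2 hm
  have hgt := pm_gt h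
  have hx₀ := h.x₀mem
  have hex : ∀ e : ℝ, ∃ z, e ∈ Set.Ioo (0:ℝ) 1 → z ∈ Set.Ioo x₀ 1 ∧ T z = e := by
    intro e
    by_cases he : e ∈ Set.Ioo (0:ℝ) 1
    · obtain ⟨z, hz, hz'⟩ := h.branch2.surjOn he
      exact ⟨z, fun _ => ⟨hz, hz'⟩⟩
    · exact ⟨0, fun h => absurd h he⟩
  choose z hz using hex
  have hz0 : Tendsto z (𝓝[>] 0) (𝓝[>] x₀) := by
    rw [tendsto_nhdsWithin_iff]
    constructor
    · rw [tendsto_order]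
      constructor
      · intro a ha
        filter_upwards [Ioo_mem_nhdsGT (zero_lt_one' ℝ)] with e he
        exact ha.trans (hz e he).1.1
      · intro a ha
        have hw : (x₀ + min a 1) / 2 ∈ Set.Ioo x₀ 1 := by
          have h1 : x₀ < min a 1 := lt_min ha hx₀.2
          have h2 : min a 1 ≤ 1 := min_le_right _ _
          constructor <;> linarith [hx₀.2]
        have hwa : (x₀ + min a 1) / 2 < a := by
          have h2 : min a 1 ≤ a := min_le_left _ _
          linarith
        have hTw := h.branch2.mapsTo hw
        filter_upwards [Ioo_mem_nhdsGT hTw.1] with e he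
        have hze := hz e ⟨he.1, he.2.trans hTw.2⟩
        by_contra! hcon
        have := hm hw hze.1 (hwa.trans_le hcon)
        linarith [he.2, hze.2]
    · filter_upwards [Ioo_mem_nhdsGT (zero_lt_one' ℝ)] with e he
      exact (hz e he).1.1
  -- right derivative at the breakpoint
  let S : ℝ → ℝ := Function.update T x₀ 0
  have hSx : S x₀ = 0 := by simp [S]
  have hSne : ∀ x, x ≠ x₀ → S x = T x := fun x hx => by simp [S, hx]
  have hSev : ∀ x ∈ Set.Ioo x₀ 1, S =ᶠ[𝓝 x] T := by
    intro x hx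
    filter_upwards [Ioo_mem_nhds hx.1 hx.2] with y hy using hSne y hy.1.ne'
  have hSd : HasDerivWithinAt S D (Set.Ici x₀) x₀ := by
    apply hasDerivWithinAt_Ici_of_tendsto_deriv (s := Set.Ioo x₀ 1)
    · intro x hx
      exact ((hd x hx).congr_of_eventuallyEq (hSev x hx)).differentiableWithinAt
    · rw [ContinuousWithinAt, hSx]
      refine (hT0.mono_left (nhdsWithin_mono _ Set.Ioo_subset_Ioi_self)).congr' ?_
      filter_upwards [self_mem_nhdsWithin] with y hy using (hSne y hy.1.ne').symm
    · exact Ioo_mem_nhdsGT hx₀.2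
    · refine hD.congr' ?_
      filter_upwards [Ioo_mem_nhdsGT hx₀.2] with y hy using (hSev y hy).deriv_eq.symm
  have hslope : Tendsto (slope S x₀) (𝓝[>] x₀) (𝓝 D) := by
    have := hasDerivWithinAt_iff_tendsto_slope.1 hSd
    simpa using this
  have hlim := (hslope.comp hz0).inv₀ (by linarith)
  have h1e : Tendsto (fun e : ℝ => (1 - e)⁻¹) (𝓝[>] 0) (𝓝 1) := by
    have : ContinuousAt (fun e : ℝ => (1 - e)⁻¹) 0 :=
      (continuousAt_const.sub continuousAt_id).inv₀ (by norm_num)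
    have h2 := this.tendsto
    norm_num at h2
    exact tendsto_nhdsWithin_of_tendsto_nhds h2
  have hfin := hlim.mul h1e
  rw [mul_one] at hfin
  refine hfin.congr' ?_
  filter_upwards [Ioo_mem_nhdsGT hx₀.1] with e he
  have he1 : e < 1 := he.2.trans hx₀.2
  obtain ⟨hze, hTz⟩ := hz e ⟨he.1, he1⟩
  have hvol : volume (Set.Ioc e 1 ∩ T ⁻¹' (Set.Icc 0 e)) = volume (Set.Ioc x₀ (z e)) := by
    apply measure_congr
    have hn : ∀ a : ℝ, ∀ᵐ x : ℝ, x ≠ a := fun a => by simp [ae_iff]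
    filter_upwards [hn x₀, hn 1] with x hxa hxb
    apply propext
    change (x ∈ Set.Ioc e 1 ∧ T x ∈ Set.Icc 0 e) ↔ x ∈ Set.Ioc x₀ (z e)
    constructor
    · rintro ⟨⟨h1, h2⟩, h3, h4⟩
      have hlt : x₀ < x := by
        by_contra! hcon
        have := hgt x ⟨he.1.trans h1, lt_of_le_of_ne hcon hxa⟩
        linarith
      refine ⟨hlt, ?_⟩
      by_contra! hcon
      have := hm hze ⟨hlt, lt_of_le_of_ne h2 hxb⟩ hcon
      linarith
    · rintro ⟨h1, h2⟩
      have hx : x ∈ Set.Ioo x₀ 1 := ⟨h1, h2.trans_lt hze.2⟩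
      refine ⟨⟨he.2.trans h1, hx.2.le⟩, (h.branch2.mapsTo hx).1.le, ?_⟩
      rw [← hTz]
      exact hm.monotoneOn hx hze h2
  rw [hvol, Real.volume_Ioc, ENNReal.toReal_ofReal (by linarith [hze.1])]
  simp only [Function.comp]
  rw [slope_def_field, hSx, hSne _ hze.1.ne', hTz, sub_zero, inv_div]
  ring

/-- For the two-state transition probabilities with respect
to Lebesgue measure, `a_{ε₀} = (ε₀ − T_left⁻¹(ε₀))/ε₀` and
`b_{ε₀} = Leb((ε₀,1] ∩ T⁻¹[0,ε₀])/(1−ε₀)`: (i) `a_{ε₀} ∼ ε₀^α`, i.e. there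
are `0 < k₁ ≤ k₂` and `δ > 0` with `k₁ ε₀^α ≤ a_{ε₀} ≤ k₂ ε₀^α` for all
`ε₀ ∈ (0,δ)`; and (ii) `lim_{ε₀→0⁺} b_{ε₀}/ε₀ = lim_{x→x₀⁺} 1/T'(x)`. -/
theorem statement18 (T : ℝ → ℝ) (x₀ α D : ℝ) (hPM : PMHyp T x₀ α)
    (hD : Tendsto (deriv T) (𝓝[>] x₀) (𝓝 D)) (hD1 : 1 ≤ D) :
    (∃ k₁ k₂ δ : ℝ, 0 < k₁ ∧ k₁ ≤ k₂ ∧ 0 < δ ∧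
      ∀ e ∈ Set.Ioo (0:ℝ) δ, ∀ y ∈ Set.Ioo (0:ℝ) x₀, T y = e →
        k₁ * e ^ α ≤ (e - y) / e ∧ (e - y) / e ≤ k₂ * e ^ α) ∧
    Tendsto
      (fun e => ((volume (Set.Ioc e 1 ∩ T ⁻¹' (Set.Icc 0 e))).toReal / (1 - e)) / e)
      (𝓝[>] (0:ℝ)) (𝓝 D⁻¹) := by
  exact ⟨pm_part1 hPM, pm_part2 hPM hD hD1⟩
end
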